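/- Let [ξ, ξ'] = {ξ + λe^J : 0 ≤ λ ≤ μ} (with μ > 0) be an ordinary segment of the tropical edge E_K. Then every point of the open segment {ξ + λe^J : 0 < λ < μ} has the same tangent digraph D_{]ξ,ξ'[}, and this digraph is the intersection of D_ξ and D_{ξ'}: its node set is the intersection of the node sets of D_ξ and D_{ξ'} (namely the coordinate nodes [n+1] and the hyperplane nodes K), and its arc set is the intersection of their arc sets. -/

import Mathlib

open scoped Classical

noncomputable section

/-- The tropical semiring `ℝ ∪ {−∞}` with max as addition, + as multiplication. -/
abbrev TT : Type := WithBot ℝ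

/-- Tropical dot product `max_j (a j + x j)`. -/
def tdot {n : ℕ} (a x : Fin n → TT) : TT :=
  Finset.univ.sup fun j => a j + x j

/-- Tropical permanent of a square matrix over `TT`. -/
def tper {q : ℕ} (M : Fin q → Fin q → TT) : TT :=
  Finset.univ.sup fun σ : Equiv.Perm (Fin q) => ∑ i, M i (σ i)

/-- A square tropical matrix is tropically singular. -/
def TropSingular {q : ℕ} (M : Fin q → Fin q → TT) : Prop :=
  tper M = ⊥ ∨ ∃ σ π : Equiv.Perm (Fin q), σ ≠ π ∧
    (∑ i, M i (σ i)) = tper M ∧ (∑ i, M i (π i)) = tper M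

/-- An (unsigned) tropical matrix is tropically generic. -/
def TropGeneric {m n : ℕ} (M : Fin m → Fin n → TT) : Prop :=
  ∀ (q : ℕ) (r : Fin q → Fin m) (c : Fin q → Fin n),
    Function.Injective r → Function.Injective c →
    tper (fun i j => M (r i) (c j)) = ⊥ ∨ ¬ TropSingular (fun i j => M (r i) (c j))

/-- sign of an entry of a signed tropical matrix. -/
def esign (ap an : TT) : ℤ :=
  if ap ≠ ⊥ then 1 else if an ≠ ⊥ then -1 else 0

/-- A signed square tropical matrix (pair of matrices) is tropically sign singular. -/
def TropSignSingular {q : ℕ} (Mp Mn : Fin q → Fin q → TT) : Prop :=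
  tper (fun i j => max (Mp i j) (Mn i j)) = ⊥ ∨
  ∃ σ π : Equiv.Perm (Fin q),
    (∑ i, max (Mp i (σ i)) (Mn i (σ i))) = tper (fun i j => max (Mp i j) (Mn i j)) ∧
    (∑ i, max (Mp i (π i)) (Mn i (π i))) = tper (fun i j => max (Mp i j) (Mn i j)) ∧
    ((Equiv.Perm.sign σ : ℤ) * ∏ i, esign (Mp i (σ i)) (Mn i (σ i)))
      ≠ ((Equiv.Perm.sign π : ℤ) * ∏ i, esign (Mp i (π i)) (Mn i (π i)))

/-- A signed tropical matrix is tropically sign generic. -/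
def TropSignGeneric {m n : ℕ} (Mp Mn : Fin m → Fin n → TT) : Prop :=
  ∀ (q : ℕ) (r : Fin q → Fin m) (c : Fin q → Fin n),
    Function.Injective r → Function.Injective c →
    tper (fun i j => max (Mp (r i) (c j)) (Mn (r i) (c j))) = ⊥ ∨
    ¬ TropSignSingular (fun i j => Mp (r i) (c j)) (fun i j => Mn (r i) (c j))

/-- Tropical polyhedron `P(A,b)` given by a signed matrix/vector. -/
def tropP {m n : ℕ} (Ap An : Fin m → Fin n → TT) (bp bn : Fin m → TT) :
    Set (Fin n → TT) :=
  {x | ∀ i, max (tdot (An i) x) (bn i) ≤ max (tdot (Ap i) x) (bp i)}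


section Tangent

variable {m n : ℕ} (Wp Wn : Fin m → Fin (n + 1) → TT)

/-- Real vector viewed inside `T^{n+1}`. -/
def toT (x : Fin (n + 1) → ℝ) : Fin (n + 1) → TT := fun j => (x j : TT)

/-- Modulus of the signed matrix `W`. -/
def tmod : Fin m → Fin (n + 1) → TT := fun i j => max (Wp i j) (Wn i j)

/-- `i` is a hyperplane node of the tangent graph at `x`. -/
def isHypNode (x : Fin (n + 1) → ℝ) (i : Fin m) : Prop :=
  tdot (Wp i) (toT x) = tdot (Wn i) (toT x) ∧ ⊥ < tdot (Wp i) (toT x)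

/-- There is an edge between hyperplane node `i` and coordinate node `j`
in the tangent graph at `x`. -/
def isTEdge (x : Fin (n + 1) → ℝ) (i : Fin m) (j : Fin (n + 1)) : Prop :=
  isHypNode Wp Wn x i ∧ tmod Wp Wn i j + (x j : TT) = tdot (tmod Wp Wn i) (toT x)

/-- Vertices of the tangent (di)graph: hyperplane nodes on the left,
coordinate nodes on the right. -/
abbrev TGV (m n : ℕ) : Type := Sum (Fin m) (Fin (n + 1))

/-- The (undirected) tangent graph at `x`. -/
def tangentGraph (x : Fin (n + 1) → ℝ) : SimpleGraph (TGV m n) :=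
  SimpleGraph.fromRel fun u v =>
    match u, v with
    | Sum.inl i, Sum.inr j => isTEdge Wp Wn x i j
    | _, _ => False

/-- The arc relation of the tangent digraph at `x`: the edge between `i` and
`j` is directed from `j` to `i` when `W_{ij}` is tropically positive, and from
`i` to `j` when it is tropically negative. -/
def arcRel (x : Fin (n + 1) → ℝ) : TGV m n → TGV m n → Prop := fun u v =>
  match u, v with
  | Sum.inr j, Sum.inl i => isTEdge Wp Wn x i j ∧ Wp i j ≠ ⊥
  | Sum.inl i, Sum.inr j => isTEdge Wp Wn x i j ∧ Wn i j ≠ ⊥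
  | _, _ => False

end Tangent

section Pivot

variable {m n : ℕ}

/-- The tropical cone `C = {x : Wᵢ⁺⊙x ≥ Wᵢ⁻⊙x for all i}`. -/
def coneC (Wp Wn : Fin m → Fin (n + 1) → TT) : Set (Fin (n + 1) → TT) :=
  {x | ∀ i, tdot (Wn i) x ≤ tdot (Wp i) x}

/-- The `i`-th s-hyperplane `Hᵢ`. -/
def hypHS (Wp Wn : Fin m → Fin (n + 1) → TT) (i : Fin m) : Set (Fin (n + 1) → TT) :=
  {x | tdot (Wp i) x = tdot (Wn i) x}

/-- The `i`-th half-space `Hᵢ^≥`. -/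
def halfHS (Wp Wn : Fin m → Fin (n + 1) → TT) (i : Fin m) : Set (Fin (n + 1) → TT) :=
  {x | tdot (Wn i) x ≤ tdot (Wp i) x}

/-- The tropical edge `E_K = ⋂_{i ∈ K} Hᵢ ∩ C` (as a set). -/
def edgeEK (Wp Wn : Fin m → Fin (n + 1) → TT) (K : Finset (Fin m)) :
    Set (Fin (n + 1) → TT) :=
  {x | (∀ i ∈ K, x ∈ hypHS Wp Wn i) ∧ x ∈ coneC Wp Wn}

/-- Indicator vector `e^J` of `J ⊆ [n+1]`. -/
def eJ (J : Finset (Fin (n + 1))) : Fin (n + 1) → ℝ := fun j => if j ∈ J then 1 else 0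

/-- `e^J` (with `∅ ⊊ J ⊊ [n+1]`) is a feasible direction from `x` in `D`. -/
def Feasible (D : Set (Fin (n + 1) → TT)) (x : Fin (n + 1) → ℝ)
    (J : Finset (Fin (n + 1))) : Prop :=
  J ≠ ∅ ∧ J ≠ Finset.univ ∧
    ∃ μ : ℝ, 0 < μ ∧ ∀ lam : ℝ, 0 ≤ lam → lam ≤ μ → toT (x + lam • eJ J) ∈ D

/-- `{ξ + λ e^J : 0 ≤ λ ≤ μ}` is an ordinary segment of the tropical edge
`E_K`: it is contained in `E_K` and is maximal in the direction `e^J`. -/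
def IsOrdSeg (Wp Wn : Fin m → Fin (n + 1) → TT) (K : Finset (Fin m))
    (ξ : Fin (n + 1) → ℝ) (J : Finset (Fin (n + 1))) (μ : ℝ) : Prop :=
  0 < μ ∧ J ≠ ∅ ∧ J ≠ Finset.univ ∧
  (∀ lam : ℝ, 0 ≤ lam → lam ≤ μ → toT (ξ + lam • eJ J) ∈ edgeEK Wp Wn K) ∧
  (∀ ε : ℝ, 0 < ε → toT (ξ - ε • eJ J) ∉ edgeEK Wp Wn K) ∧
  (∀ ε : ℝ, 0 < ε → toT (ξ + (μ + ε) • eJ J) ∉ edgeEK Wp Wn K)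

/-- `x` is a breakpoint of `E_K`: an intermediate endpoint shared by two
consecutive ordinary segments. -/
def IsBreakpoint (Wp Wn : Fin m → Fin (n + 1) → TT) (K : Finset (Fin m))
    (x : Fin (n + 1) → ℝ) : Prop :=
  ∃ ξ J μ, IsOrdSeg Wp Wn K ξ J μ ∧ x = ξ + μ • eJ J ∧
    ∃ J' μ', IsOrdSeg Wp Wn K x J' μ' ∧ J ⊂ J'

/-- `x` lies in the relative interior of an ordinary segment of `E_K`. -/
def InRelIntSeg (Wp Wn : Fin m → Fin (n + 1) → TT) (K : Finset (Fin m))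
    (x : Fin (n + 1) → ℝ) : Prop :=
  ∃ ξ J μ, IsOrdSeg Wp Wn K ξ J μ ∧ ∃ lam : ℝ, 0 < lam ∧ lam < μ ∧ x = ξ + lam • eJ J

/-- Embedding of `TT = ℝ ∪ {−∞}` into `EReal`. -/
def tE : TT → EReal := WithBot.recBotCoe ⊥ (fun r => (r : EReal))

/-- `λ⁺_i(ξ,J) = (Wᵢ⁺⊙ξ) − max_{j∈J}(W⁺_{ij} + ξ_j)`, with `−(−∞) = +∞`. -/
def lamP (Wp : Fin m → Fin (n + 1) → TT) (i : Fin m) (ξ : Fin (n + 1) → ℝ)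
    (J : Finset (Fin (n + 1))) : EReal :=
  tE (tdot (Wp i) (toT ξ)) - tE (J.sup fun j => Wp i j + (ξ j : TT))

/-- `λ⁻_i(ξ,J) = (Wᵢ⁺⊙ξ) − max_{j∈J}(W⁻_{ij} + ξ_j)`, with `−(−∞) = +∞`. -/
def lamM (Wp Wn : Fin m → Fin (n + 1) → TT) (i : Fin m) (ξ : Fin (n + 1) → ℝ)
    (J : Finset (Fin (n + 1))) : EReal :=
  tE (tdot (Wp i) (toT ξ)) - tE (J.sup fun j => Wn i j + (ξ j : TT))

/-- `argmax(Wᵢ⁺⊙ξ)`. -/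
def argmaxP (Wp : Fin m → Fin (n + 1) → TT) (i : Fin m) (ξ : Fin (n + 1) → ℝ) :
    Set (Fin (n + 1)) :=
  {j | Wp i j + (ξ j : TT) = tdot (Wp i) (toT ξ)}

/-- `argmax(Wᵢ⁻⊙ξ)`. -/
def argmaxM (Wn : Fin m → Fin (n + 1) → TT) (i : Fin m) (ξ : Fin (n + 1) → ℝ) :
    Set (Fin (n + 1)) :=
  {j | Wn i j + (ξ j : TT) = tdot (Wn i) (toT ξ)}

/-- `Λ(ξ,J)`: candidate entering constraints. -/
def entSet (Wp : Fin m → Fin (n + 1) → TT) (K : Finset (Fin m))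
    (ξ : Fin (n + 1) → ℝ) (J : Finset (Fin (n + 1))) : Set (Fin m) :=
  {i | i ∉ K ∧ ∀ j ∈ J, j ∉ argmaxP Wp i ξ}

/-- `B(ξ,J)`: candidate breakpoint constraints. -/
def brkSet (Wp Wn : Fin m → Fin (n + 1) → TT) (K : Finset (Fin m))
    (ξ : Fin (n + 1) → ℝ) (J : Finset (Fin (n + 1))) : Set (Fin m) :=
  {i | i ∈ K ∧ (∀ j ∈ J, j ∉ argmaxP Wp i ξ) ∧ ∀ j ∈ J, j ∉ argmaxM Wn i ξ}

/-- Coordinate nodes with an arc into hyperplane node `i`. -/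
def degIn (Wp Wn : Fin m → Fin (n + 1) → TT) (x : Fin (n + 1) → ℝ) (i : Fin m) :
    Set (Fin (n + 1)) :=
  {j | arcRel Wp Wn x (Sum.inr j) (Sum.inl i)}

/-- Coordinate nodes with an arc out of hyperplane node `i`. -/
def degOut (Wp Wn : Fin m → Fin (n + 1) → TT) (x : Fin (n + 1) → ℝ) (i : Fin m) :
    Set (Fin (n + 1)) :=
  {j | arcRel Wp Wn x (Sum.inl i) (Sum.inr j)}

/-- Hyperplane node `i` has degree `(1,1)` in the tangent digraph at `x`. -/
def deg11 (Wp Wn : Fin m → Fin (n + 1) → TT) (x : Fin (n + 1) → ℝ) (i : Fin m) : Prop :=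
  (∃! j, j ∈ degIn Wp Wn x i) ∧ (∃! j, j ∈ degOut Wp Wn x i)

/-- Hyperplane node `i` has degree `(2,1)`. -/
def deg21 (Wp Wn : Fin m → Fin (n + 1) → TT) (x : Fin (n + 1) → ℝ) (i : Fin m) : Prop :=
  (degIn Wp Wn x i).ncard = 2 ∧ (∃! j, j ∈ degOut Wp Wn x i)

/-- Hyperplane node `i` has degree `(1,2)`. -/
def deg12 (Wp Wn : Fin m → Fin (n + 1) → TT) (x : Fin (n + 1) → ℝ) (i : Fin m) : Prop :=
  (∃! j, j ∈ degIn Wp Wn x i) ∧ (degOut Wp Wn x i).ncard = 2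

/-- The support of the tangent graph at `x`: all coordinate nodes together
with the hyperplane nodes. -/
def suppV (Wp Wn : Fin m → Fin (n + 1) → TT) (x : Fin (n + 1) → ℝ) : Set (TGV m n) :=
  {v | match v with
       | Sum.inl i => isHypNode Wp Wn x i
       | Sum.inr _ => True}

/-- The underlying undirected edge relation of the tangent graph. -/
def tedgeRel (Wp Wn : Fin m → Fin (n + 1) → TT) (x : Fin (n + 1) → ℝ) :
    TGV m n → TGV m n → Prop := fun u v =>
  match u, v with
  | Sum.inl i, Sum.inr j => isTEdge Wp Wn x i j
  | _, _ => False

/-- The tangent graph with the hyperplane node `ℓ` (and its incident edges)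
deleted. -/
def delNode (Wp Wn : Fin m → Fin (n + 1) → TT) (x : Fin (n + 1) → ℝ) (ℓ : Fin m) :
    SimpleGraph (TGV m n) :=
  SimpleGraph.fromRel fun u v =>
    tedgeRel Wp Wn x u v ∧ u ≠ Sum.inl ℓ ∧ v ≠ Sum.inl ℓ

/-- The tangent graph with the edge between hyperplane node `k` and coordinate
node `j` deleted. -/
def delEdge (Wp Wn : Fin m → Fin (n + 1) → TT) (x : Fin (n + 1) → ℝ) (k : Fin m)
    (j : Fin (n + 1)) : SimpleGraph (TGV m n) :=
  SimpleGraph.fromRel fun u v =>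
    tedgeRel Wp Wn x u v ∧ ¬(u = Sum.inl k ∧ v = Sum.inr j)

/-- Coordinate nodes weakly connected to hyperplane node `k` after deleting the
edge between `k` and `j`. -/
def reachJ (Wp Wn : Fin m → Fin (n + 1) → TT) (x : Fin (n + 1) → ℝ) (k : Fin m)
    (j : Fin (n + 1)) : Finset (Fin (n + 1)) :=
  Finset.univ.filter fun l => (delEdge Wp Wn x k j).Reachable (Sum.inl k) (Sum.inr l)

end Pivot

/-!
Genericity forbids two distinct perfect matchings of the same rows with the same columns by tight
entries, since they would be two optimal permutations of a square submatrix. By Hall's theorem it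
follows that fewer than `|C|` hyperplane nodes have two neighbours inside a given nonempty set `C`
of coordinates. On the open segment, the inequalities of the cone at the two ends force every
hyperplane node to have two neighbours in `J` or two neighbours outside `J`, and a node of `K` with
neighbours on both sides to have two on each. Counting over `J` and its complement leaves room for
only `n - 1 = |K|` such pairs, so the nodes are exactly `K` and each sees only one side of `J`.
Hence no maximum `|W|ᵢ ⊙ x` with `i ∈ K` passes from `Jᶜ` to `J` inside the segment: it has constant
slope `0` or `1` there, and its argmax in the interior is the intersection of those at the ends.
-/

section Matching

open Finset

variable {ρ κ : Type*}

/-- The neighbourhoods `N` of a bipartite graph admit at most one perfect matching between any two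
finite sets of nodes: a matching `f` of the rows `R` cannot be permuted into another one. -/
def HasUniqueMatchings (N : ρ → Finset κ) : Prop :=
  ∀ (R : Finset ρ) (f : R ↪ κ) (σ : Equiv.Perm R),
    (∀ i : R, f i ∈ N i) → (∀ i : R, f (σ i) ∈ N i) → σ = 1

theorem periodicPts_nonempty {α : Type*} [Finite α] [Nonempty α] (g : α → α) :
    (Function.periodicPts g).Nonempty := by
  obtain ⟨a⟩ := ‹Nonempty α›
  obtain ⟨k, l, hkl, heq⟩ := Finite.exists_ne_map_eq_of_infinite (fun k : ℕ => g^[k] a)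
  wlog hlt : k < l generalizing k l
  · exact this l k hkl.symm heq.symm (by omega)
  refine ⟨g^[k] a, Function.mk_mem_periodicPts (Nat.sub_pos_of_lt hlt) ?_⟩
  rw [Function.IsPeriodicPt, Function.IsFixedPt, ← Function.iterate_add_apply,
    Nat.sub_add_cancel hlt.le]
  exact heq.symm

theorem exists_perm_ne_one_of_forall_ne {α : Type*} [Finite α] [Nonempty α] {g : α → α}
    (hg : ∀ a, g a ≠ a) : ∃ σ : Equiv.Perm α, σ ≠ 1 ∧ ∀ a, σ a = a ∨ σ a = g a := by
  let σ : Equiv.Perm α := Equiv.Perm.ofSubtype ((Function.bijOn_periodicPts g).equiv)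
  have hσ : ∀ a ∈ Function.periodicPts g, σ a = g a := fun a ha =>
    Equiv.Perm.ofSubtype_apply_of_mem _ ha
  refine ⟨σ, fun h => ?_, fun a => ?_⟩
  · obtain ⟨p, hp⟩ := periodicPts_nonempty g
    exact hg p (by rw [← hσ p hp, h, Equiv.Perm.one_apply])
  · by_cases ha : a ∈ Function.periodicPts g
    · exact Or.inr (hσ a ha)
    · exact Or.inl (Equiv.Perm.ofSubtype_apply_of_not_mem _ ha)

theorem exists_matching_of_card_le_card_biUnion [DecidableEq κ] {N : ρ → Finset κ}
    {R : Finset ρ} (hall : ∀ S ⊆ R, #S ≤ #(S.biUnion N)) : ∃ f : R ↪ κ, ∀ i : R, f i ∈ N i := by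
  obtain ⟨f, hf, hfN⟩ := (all_card_le_biUnion_card_iff_exists_injective fun i : R => N i).mp
    fun S => by
      have hS := hall (S.map (.subtype _)) (map_subtype_subset S)
      rwa [card_map, map_eq_image, image_biUnion] at hS
  exact ⟨⟨f, hf⟩, hfN⟩

namespace HasUniqueMatchings

variable {N : ρ → Finset κ}

theorem mono {N' : ρ → Finset κ} (h : HasUniqueMatchings N) (hN : ∀ i, N' i ⊆ N i) :
    HasUniqueMatchings N' :=
  fun R f σ h₁ h₂ => h R f σ (fun i => hN i (h₁ i)) fun i => hN i (h₂ i)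

variable [DecidableEq κ]

theorem card_lt_card_biUnion_of_matching (h : HasUniqueMatchings N) {R : Finset ρ}
    (hR : R.Nonempty) (hN : ∀ i ∈ R, 1 < #(N i)) (f : R ↪ κ) (hf : ∀ i : R, f i ∈ N i) :
    #R < #(R.biUnion N) := by
  by_contra! hcard
  have himage : univ.image f = R.biUnion N := by
    refine eq_of_subset_of_card_le (fun j hj => ?_) ?_
    · obtain ⟨i, -, rfl⟩ := mem_image.mp hj
      exact mem_biUnion.mpr ⟨i, i.2, hf i⟩
    · rwa [card_image_of_injective _ f.injective, card_univ, Fintype.card_coe]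
  have hother : ∀ i : R, ∃ k, k ≠ i ∧ f k ∈ N i := fun i => by
    obtain ⟨j, hj, hne⟩ := exists_mem_ne (hN i i.2) (f i)
    have hjR : j ∈ R.biUnion N := mem_biUnion.mpr ⟨i, i.2, hj⟩
    rw [← himage] at hjR
    obtain ⟨k, -, rfl⟩ := mem_image.mp hjR
    exact ⟨k, fun hk => hne (hk ▸ rfl), hj⟩
  choose g hne hg using hother
  have := hR.to_subtype
  obtain ⟨σ, hσ, hσg⟩ := exists_perm_ne_one_of_forall_ne hne
  refine hσ (h R f σ hf fun i => ?_)
  rcases hσg i with hi | hi <;> rw [hi]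
  exacts [hf i, hg i]

theorem card_le_card_biUnion (h : HasUniqueMatchings N) (R : Finset ρ)
    (hN : ∀ i ∈ R, 1 < #(N i)) : #R ≤ #(R.biUnion N) := by
  induction R using Finset.strongInduction with
  | H R ih =>
  obtain rfl | ⟨i, hi⟩ := R.eq_empty_or_nonempty
  · simp
  obtain hempty | hne := (R.erase i).eq_empty_or_nonempty
  · calc #R = 1 := by rw [← card_erase_add_one hi, hempty, card_empty]
      _ ≤ #(N i) := (hN i hi).le
      _ ≤ #(R.biUnion N) := card_le_card (subset_biUnion_of_mem N hi)
  · obtain ⟨f, hf⟩ := exists_matching_of_card_le_card_biUnion (N := N) (R := R.erase i)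
      fun S hS => ih S (hS.trans_ssubset (erase_ssubset hi))
        fun k hk => hN k (mem_of_mem_erase (hS hk))
    calc #R = #(R.erase i) + 1 := (card_erase_add_one hi).symm
      _ ≤ #((R.erase i).biUnion N) :=
        h.card_lt_card_biUnion_of_matching hne (fun k hk => hN k (mem_of_mem_erase hk)) f hf
      _ ≤ #(R.biUnion N) :=
        card_le_card (biUnion_subset_biUnion_of_subset_left N (erase_subset i R))

theorem card_lt_card_biUnion (h : HasUniqueMatchings N) {R : Finset ρ} (hR : R.Nonempty)
    (hN : ∀ i ∈ R, 1 < #(N i)) : #R < #(R.biUnion N) := by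
  obtain ⟨f, hf⟩ := exists_matching_of_card_le_card_biUnion (N := N) (R := R)
    fun S hS => h.card_le_card_biUnion S fun i hi => hN i (hS hi)
  exact h.card_lt_card_biUnion_of_matching hR hN f hf

theorem card_lt_card_of_one_lt_card_inter (h : HasUniqueMatchings N) {R : Finset ρ}
    {C : Finset κ} (hC : C.Nonempty) (hN : ∀ i ∈ R, 1 < #(N i ∩ C)) : #R < #C := by
  obtain rfl | hR := R.eq_empty_or_nonempty
  · exact hC.card_pos
  · exact ((h.mono fun i => inter_subset_left).card_lt_card_biUnion hR hN).trans_le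
      (card_le_card (biUnion_subset.mpr fun i _ => inter_subset_right))

theorem subset_and_not_one_lt_card_both_of_card_le [Fintype κ] (h : HasUniqueMatchings N)
    {J : Finset κ} (hJ : J.Nonempty) (hJc : Jᶜ.Nonempty) {K S : Finset ρ} (hKS : K ⊆ S)
    (hcard : Fintype.card κ ≤ #K + 2) (hS : ∀ i ∈ S, 1 < #(N i ∩ J) ∨ 1 < #(N i ∩ Jᶜ)) :
    S ⊆ K ∧ ∀ i ∈ S, ¬(1 < #(N i ∩ J) ∧ 1 < #(N i ∩ Jᶜ)) := by
  set A := {i ∈ S | 1 < #(N i ∩ J)} with hA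
  set B := {i ∈ S | 1 < #(N i ∩ Jᶜ)} with hB
  have hAcard : #A < #J := h.card_lt_card_of_one_lt_card_inter hJ fun i hi => (mem_filter.mp hi).2
  have hBcard : #B < #Jᶜ := h.card_lt_card_of_one_lt_card_inter hJc fun i hi => (mem_filter.mp hi).2
  have hAB : A ∪ B = S := by rw [hA, hB, ← filter_or, filter_eq_self]; exact hS
  have hsum : #S + #(A ∩ B) = #A + #B := hAB ▸ card_union_add_card_inter A B
  have hcompl := card_add_card_compl J
  have hKS_card := card_le_card hKS
  refine ⟨(eq_of_subset_of_card_le hKS (by omega)).ge, fun i hi hboth => ?_⟩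
  have : A ∩ B = ∅ := card_eq_zero.mp (by omega)
  exact notMem_empty i (this ▸ mem_inter.mpr
    ⟨mem_filter.mpr ⟨hi, hboth.1⟩, mem_filter.mpr ⟨hi, hboth.2⟩⟩)

end HasUniqueMatchings

end Matching

section TightColumns

open Finset

variable {n : ℕ}

/-- The argmax of `a ⊙ x`. When `x` lies on the `i`-th hyperplane and `a` is the `i`-th row of
`|W|`, these are the neighbours of `i` in the tangent graph at `x`. -/
def tightCols (a : Fin (n + 1) → TT) (x : Fin (n + 1) → ℝ) : Finset (Fin (n + 1)) :=
  {j | a j + (x j : TT) = tdot a (toT x)}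

theorem mem_tightCols {a : Fin (n + 1) → TT} {x : Fin (n + 1) → ℝ} {j : Fin (n + 1)} :
    j ∈ tightCols a x ↔ a j + (x j : TT) = tdot a (toT x) := by
  simp [tightCols]

theorem add_coe_le_tdot (a : Fin (n + 1) → TT) (x : Fin (n + 1) → ℝ) (j : Fin (n + 1)) :
    a j + (x j : TT) ≤ tdot a (toT x) :=
  le_sup (f := fun j => a j + toT x j) (mem_univ j)

theorem mem_tightCols_iff_le {a : Fin (n + 1) → TT} {x : Fin (n + 1) → ℝ} {j : Fin (n + 1)} :
    j ∈ tightCols a x ↔ tdot a (toT x) ≤ a j + (x j : TT) := by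
  rw [mem_tightCols, le_antisymm_iff, and_iff_right (add_coe_le_tdot a x j)]

theorem tightCols_nonempty (a : Fin (n + 1) → TT) (x : Fin (n + 1) → ℝ) :
    (tightCols a x).Nonempty := by
  obtain ⟨j, -, hj⟩ := exists_mem_eq_sup univ univ_nonempty fun j => a j + toT x j
  exact ⟨j, mem_tightCols.mpr hj.symm⟩

theorem tdot_toT_ne_bot {a : Fin (n + 1) → TT} (ha : ∃ j, a j ≠ ⊥) (x : Fin (n + 1) → ℝ) :
    tdot a (toT x) ≠ ⊥ := by
  obtain ⟨j, hj⟩ := ha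
  exact ne_bot_of_le_ne_bot (WithBot.add_ne_bot.mpr ⟨hj, WithBot.coe_ne_bot⟩)
    (add_coe_le_tdot a x j)

theorem add_coe_le_add_coe_of_sub_le_sub {a b : TT} {x y x' y' : ℝ}
    (h : a + (x : TT) ≤ b + (y : TT)) (hsub : x' - x ≤ y' - y) : a + (x' : TT) ≤ b + (y' : TT) :=
  calc a + (x' : TT) = a + (x : TT) + ((x' - x : ℝ) : TT) := by
        rw [add_assoc, ← WithBot.coe_add, add_sub_cancel]
    _ ≤ b + (y : TT) + ((y' - y : ℝ) : TT) := add_le_add h (WithBot.coe_le_coe.mpr hsub)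
    _ = b + (y' : TT) := by rw [add_assoc, ← WithBot.coe_add, add_sub_cancel]

theorem tdot_le_tdot_add {a : Fin (n + 1) → TT} {x y : Fin (n + 1) → ℝ} {c : ℝ}
    (hxy : ∀ j, x j ≤ y j + c) : tdot a (toT x) ≤ tdot a (toT y) + (c : TT) :=
  Finset.sup_le fun j _ =>
    calc a j + (x j : TT) ≤ a j + (y j : TT) + (c : TT) := by
          rw [add_assoc, ← WithBot.coe_add]
          gcongr
          exact WithBot.coe_le_coe.mpr (hxy j)
      _ ≤ tdot a (toT y) + (c : TT) := by gcongr; exact add_coe_le_tdot a y j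

theorem tdot_sup (p q : Fin (n + 1) → TT) (x : Fin (n + 1) → ℝ) :
    tdot (p ⊔ q) (toT x) = tdot p (toT x) ⊔ tdot q (toT x) := by
  simp only [tdot, ← sup_sup]
  exact sup_congr rfl fun j _ => max_add _ _ _

theorem tightCols_sup {p q : Fin (n + 1) → TT} {x : Fin (n + 1) → ℝ}
    (hpq : tdot p (toT x) = tdot q (toT x)) :
    tightCols (p ⊔ q) x = tightCols p x ∪ tightCols q x := by
  ext j
  have hterm : (p ⊔ q) j + (x j : TT) = max (p j + (x j : TT)) (q j + (x j : TT)) := max_add _ _ _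
  rw [mem_union, mem_tightCols_iff_le, mem_tightCols_iff_le, mem_tightCols_iff_le, tdot_sup, ← hpq,
    sup_idem, hterm, le_max_iff]

theorem one_lt_card_tightCols_sup_inter {p q : Fin (n + 1) → TT} {x : Fin (n + 1) → ℝ}
    {C : Finset (Fin (n + 1))} (hsign : ∀ j, min (p j) (q j) = ⊥)
    (hpq : tdot p (toT x) = tdot q (toT x)) (hne : tdot p (toT x) ≠ ⊥)
    (hp : (tightCols p x ∩ C).Nonempty) (hq : (tightCols q x ∩ C).Nonempty) :
    1 < #(tightCols (p ⊔ q) x ∩ C) := by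
  obtain ⟨j, hj⟩ := hp
  obtain ⟨k, hk⟩ := hq
  rw [tightCols_sup hpq, union_inter_distrib_right]
  refine one_lt_card.mpr ⟨j, mem_union_left _ hj, k, mem_union_right _ hk, ?_⟩
  rintro rfl
  have hpj := mem_tightCols.mp (mem_inter.mp hj).1
  have hqj := mem_tightCols.mp (mem_inter.mp hk).1
  rcases min_eq_bot.mp (hsign j) with h | h
  · exact hne (by rw [← hpj, h, WithBot.bot_add])
  · exact hne (by rw [hpq, ← hqj, h, WithBot.bot_add])

end TightColumns

section Genericity

open Finset

variable {m n : ℕ}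

-- Adding `x (c b)` to column `b` shifts all permutation sums by the same real number, and after the
-- shift a permutation through tight entries attains the maximum of every row.
theorem sum_eq_tper_of_mem_tightCols {q : ℕ} {M : Fin q → Fin (n + 1) → TT}
    {x : Fin (n + 1) → ℝ} {c : Fin q → Fin (n + 1)} {σ : Equiv.Perm (Fin q)}
    (hσ : ∀ a, c (σ a) ∈ tightCols (M a) x) :
    ∑ a, M a (c (σ a)) = tper fun a b => M a (c b) := by
  have hshift : ∀ π : Equiv.Perm (Fin q), ∑ a, (M a (c (π a)) + (x (c (π a)) : TT)) =
      ∑ a, M a (c (π a)) + ((∑ a, x (c a) : ℝ) : TT) := fun π => by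
    rw [sum_add_distrib, ← Equiv.sum_comp π fun a => x (c a), WithBot.coe_sum]
  refine le_antisymm (le_sup (f := fun π : Equiv.Perm (Fin q) => ∑ a, M a (c (π a)))
    (mem_univ σ)) (Finset.sup_le fun π _ => ?_)
  rw [← WithBot.add_le_add_iff_right (WithBot.coe_ne_bot (a := ∑ a, x (c a))),
    ← hshift, ← hshift]
  exact sum_le_sum fun a _ => (add_coe_le_tdot (M a) x _).trans_eq (mem_tightCols.mp (hσ a)).symm

theorem tper_ne_bot_of_mem_tightCols {q : ℕ} {M : Fin q → Fin (n + 1) → TT}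
    (hM : ∀ a, ∃ j, M a j ≠ ⊥) {x : Fin (n + 1) → ℝ} {c : Fin q → Fin (n + 1)}
    (hc : ∀ a, c a ∈ tightCols (M a) x) : (tper fun a b => M a (c b)) ≠ ⊥ := by
  rw [← sum_eq_tper_of_mem_tightCols (σ := 1) hc, Ne, WithBot.sum_eq_bot_iff]
  rintro ⟨a, -, ha⟩
  refine tdot_toT_ne_bot (hM a) x ?_
  rw [Equiv.Perm.one_apply] at ha
  rw [← mem_tightCols.mp (hc a), ha, WithBot.bot_add]

theorem TropGeneric.hasUniqueMatchings_tightCols {M : Fin m → Fin (n + 1) → TT}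
    (hgen : TropGeneric M) (hM : ∀ i, ∃ j, M i j ≠ ⊥) (x : Fin (n + 1) → ℝ) :
    HasUniqueMatchings fun i => tightCols (M i) x := by
  intro R f σ hf hfσ
  let e := R.equivFin
  let τ : Equiv.Perm (Fin #R) := e.permCongrHom σ
  have hτ : ∀ a, f (e.symm (τ a)) ∈ tightCols (M (e.symm a)) x := fun a => by
    simpa [τ] using hfσ (e.symm a)
  rcases hgen _ (fun a => e.symm a) (fun a => f (e.symm a))
    (Subtype.val_injective.comp e.symm.injective) (f.injective.comp e.symm.injective) with h | h
  · exact absurd h (tper_ne_bot_of_mem_tightCols (fun a => hM _) fun a => hf _)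
  · by_contra hσ
    refine h (Or.inr ⟨τ, 1, fun h => hσ ((map_eq_one_iff _ e.permCongrHom.injective).mp h), ?_, ?_⟩)
    · exact sum_eq_tper_of_mem_tightCols (c := fun a => f (e.symm a)) hτ
    · exact sum_eq_tper_of_mem_tightCols (c := fun a => f (e.symm a)) fun a => hf (e.symm a)

end Genericity

section Line

open Finset

/-- The set `C` of coordinates has elements in `J` and outside `J`. For the neighbours of a
hyperplane node at a point of a line of direction `e^J`, this is where the slope of the maximum
changes. -/
def MeetsBothSides {κ : Type*} [Fintype κ] [DecidableEq κ] (C J : Finset κ) : Prop :=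
  (C ∩ J).Nonempty ∧ (C ∩ Jᶜ).Nonempty

variable {n : ℕ} {ξ : Fin (n + 1) → ℝ} {J : Finset (Fin (n + 1))} {j : Fin (n + 1)}
  {s t u : ℝ} {a : Fin (n + 1) → TT}

theorem add_smul_eJ_apply_of_mem (hj : j ∈ J) : (ξ + t • eJ J) j = ξ j + t := by
  simp [eJ, hj]

theorem add_smul_eJ_apply_of_notMem (hj : j ∉ J) : (ξ + t • eJ J) j = ξ j := by
  simp [eJ, hj]

theorem add_smul_eJ_apply_mono (hst : s ≤ t) : (ξ + s • eJ J) j ≤ (ξ + t • eJ J) j := by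
  by_cases hj : j ∈ J
  · simpa only [add_smul_eJ_apply_of_mem hj, add_le_add_iff_left]
  · simp only [add_smul_eJ_apply_of_notMem hj, le_refl]

theorem add_smul_eJ_apply_le_add (hst : s ≤ t) :
    (ξ + t • eJ J) j ≤ (ξ + s • eJ J) j + (t - s) := by
  by_cases hj : j ∈ J
  · simp only [add_smul_eJ_apply_of_mem hj]; linarith
  · simp only [add_smul_eJ_apply_of_notMem hj]; linarith

theorem tdot_line_mono (a : Fin (n + 1) → TT) (hst : s ≤ t) :
    tdot a (toT (ξ + s • eJ J)) ≤ tdot a (toT (ξ + t • eJ J)) := by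
  simpa only [WithBot.coe_zero, add_zero] using tdot_le_tdot_add (a := a) (c := 0) fun j =>
    (add_smul_eJ_apply_mono (ξ := ξ) (J := J) hst).trans_eq (add_zero _).symm

theorem tdot_line_le_add (a : Fin (n + 1) → TT) (hst : s ≤ t) :
    tdot a (toT (ξ + t • eJ J)) ≤ tdot a (toT (ξ + s • eJ J)) + ((t - s : ℝ) : TT) :=
  tdot_le_tdot_add fun _ => add_smul_eJ_apply_le_add hst

-- An ordinary segment of direction `e^J` is also the tropical segment between its ends, and
-- `x ↦ a ⊙ x` is tropically linear.
theorem tdot_line_eq_max (a : Fin (n + 1) → TT) (hst : s ≤ t) (htu : t ≤ u) :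
    tdot a (toT (ξ + t • eJ J)) =
      max (tdot a (toT (ξ + s • eJ J))) (tdot a (toT (ξ + u • eJ J)) + ((t - u : ℝ) : TT)) := by
  refine le_antisymm (Finset.sup_le fun j _ => ?_) (max_le (tdot_line_mono a hst) ?_)
  · by_cases hj : j ∈ J
    · refine le_max_of_le_right ?_
      calc a j + ((ξ + t • eJ J) j : TT)
          = a j + ((ξ + u • eJ J) j : TT) + ((t - u : ℝ) : TT) := by
            rw [add_assoc, ← WithBot.coe_add, add_smul_eJ_apply_of_mem hj,
              add_smul_eJ_apply_of_mem hj]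
            ring_nf
        _ ≤ _ := by gcongr; exact add_coe_le_tdot a _ j
    · refine le_max_of_le_left (le_trans (le_of_eq ?_) (add_coe_le_tdot a _ j))
      rw [add_smul_eJ_apply_of_notMem hj, toT, add_smul_eJ_apply_of_notMem hj]
  · calc _ ≤ tdot a (toT (ξ + t • eJ J)) + ((u - t : ℝ) : TT) + ((t - u : ℝ) : TT) := by
          gcongr; exact tdot_line_le_add a htu
      _ = _ := by simp [add_assoc, ← WithBot.coe_add]

theorem add_le_tdot_line_iff (ha : tdot a (toT (ξ + s • eJ J)) ≠ ⊥) (hst : s < t) :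
    tdot a (toT (ξ + s • eJ J)) + ((t - s : ℝ) : TT) ≤ tdot a (toT (ξ + t • eJ J)) ↔
      (tightCols a (ξ + s • eJ J) ∩ J).Nonempty := by
  constructor
  · intro h
    obtain ⟨k, hk⟩ := tightCols_nonempty a (ξ + t • eJ J)
    rw [← mem_tightCols.mp hk] at h
    by_cases hkJ : k ∈ J
    · refine ⟨k, mem_inter.mpr ⟨mem_tightCols_iff_le.mpr ?_, hkJ⟩⟩
      rw [add_smul_eJ_apply_of_mem hkJ] at h ⊢
      simpa using add_coe_le_add_coe_of_sub_le_sub (x' := 0) (y' := ξ k + s) h (by linarith)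
    · have hle := add_coe_le_tdot a (ξ + s • eJ J) k
      rw [add_smul_eJ_apply_of_notMem hkJ] at h hle
      obtain ⟨v, hv⟩ := WithBot.ne_bot_iff_exists.mp ha
      have hlt := h.trans hle
      rw [← hv, ← WithBot.coe_add, WithBot.coe_le_coe] at hlt
      linarith
  · rintro ⟨j, hj⟩
    obtain ⟨hjs, hjJ⟩ := mem_inter.mp hj
    refine le_trans (le_of_eq ?_) (add_coe_le_tdot a _ j)
    rw [← mem_tightCols.mp hjs, add_assoc, ← WithBot.coe_add, add_smul_eJ_apply_of_mem hjJ,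
      add_smul_eJ_apply_of_mem hjJ]
    ring_nf

theorem tdot_line_le_iff (ha : tdot a (toT (ξ + t • eJ J)) ≠ ⊥) (hst : s < t) :
    tdot a (toT (ξ + t • eJ J)) ≤ tdot a (toT (ξ + s • eJ J)) ↔
      (tightCols a (ξ + t • eJ J) ∩ Jᶜ).Nonempty := by
  constructor
  · intro h
    obtain ⟨k, hk⟩ := tightCols_nonempty a (ξ + s • eJ J)
    rw [← mem_tightCols.mp hk] at h
    by_cases hkJ : k ∈ J
    · have hle := (add_coe_le_tdot a (ξ + t • eJ J) k).trans h
      have hak : a k ≠ ⊥ := by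
        rintro hbot
        rw [hbot, WithBot.bot_add, le_bot_iff] at h
        exact ha h
      obtain ⟨v, hv⟩ := WithBot.ne_bot_iff_exists.mp hak
      rw [add_smul_eJ_apply_of_mem hkJ, add_smul_eJ_apply_of_mem hkJ, ← hv, ← WithBot.coe_add,
        ← WithBot.coe_add, WithBot.coe_le_coe] at hle
      linarith
    · refine ⟨k, mem_inter.mpr ⟨mem_tightCols_iff_le.mpr ?_, mem_compl.mpr hkJ⟩⟩
      rwa [add_smul_eJ_apply_of_notMem hkJ] at h ⊢
  · rintro ⟨j, hj⟩
    obtain ⟨hjt, hjJ⟩ := mem_inter.mp hj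
    refine le_trans (le_of_eq ?_) (add_coe_le_tdot a _ j)
    rw [← mem_tightCols.mp hjt, add_smul_eJ_apply_of_notMem (mem_compl.mp hjJ),
      add_smul_eJ_apply_of_notMem (mem_compl.mp hjJ)]

theorem tdot_line_eq_or_eq_add_of_not_meetsBothSides (ha : ∃ j, a j ≠ ⊥) (hsu : s ≤ u)
    (hsides : ∀ t, s < t → t < u → ¬MeetsBothSides (tightCols a (ξ + t • eJ J)) J) :
    tdot a (toT (ξ + u • eJ J)) = tdot a (toT (ξ + s • eJ J)) ∨
      tdot a (toT (ξ + u • eJ J)) = tdot a (toT (ξ + s • eJ J)) + ((u - s : ℝ) : TT) := by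
  have hmono := tdot_line_mono (ξ := ξ) (J := J) a hsu
  have hlip := tdot_line_le_add (ξ := ξ) (J := J) a hsu
  obtain ⟨α, hα⟩ := WithBot.ne_bot_iff_exists.mp (tdot_toT_ne_bot ha (ξ + s • eJ J))
  obtain ⟨β, hβ⟩ := WithBot.ne_bot_iff_exists.mp (tdot_toT_ne_bot ha (ξ + u • eJ J))
  rw [← hα, ← hβ] at hmono hlip ⊢
  rw [← WithBot.coe_add] at hlip ⊢
  rw [WithBot.coe_le_coe] at hmono hlip
  rw [WithBot.coe_inj, WithBot.coe_inj]
  by_contra! hslope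
  have hβ_gt : α < β := lt_of_le_of_ne hmono hslope.1.symm
  have hβ_lt : β < α + (u - s) := lt_of_le_of_ne hlip hslope.2
  -- the parameter at which the slope of the maximum would change from `0` to `1`
  let d := u - (β - α)
  have hsd : s < d := by simp only [d]; linarith
  have hdu : d < u := by simp only [d]; linarith
  have hd : tdot a (toT (ξ + d • eJ J)) = (α : TT) := by
    rw [tdot_line_eq_max a hsd.le hdu.le, ← hα, ← hβ, ← WithBot.coe_add]
    simp [d]
  refine hsides d hsd hdu ⟨(add_le_tdot_line_iff (tdot_toT_ne_bot ha _) hdu).mp ?_,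
    (tdot_line_le_iff (tdot_toT_ne_bot ha _) hsd).mp ?_⟩
  · rw [hd, ← hβ, ← WithBot.coe_add, WithBot.coe_le_coe]
    simp [d]
  · rw [hd, hα]

theorem mem_tightCols_line_of_mem_ends (hst : s ≤ t) (htu : t ≤ u)
    (hs : j ∈ tightCols a (ξ + s • eJ J)) (hu : j ∈ tightCols a (ξ + u • eJ J)) :
    j ∈ tightCols a (ξ + t • eJ J) := by
  rw [mem_tightCols_iff_le, tdot_line_eq_max a hst htu, ← mem_tightCols.mp hs,
    ← mem_tightCols.mp hu, add_assoc, ← WithBot.coe_add]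
  refine max_le ?_ ?_
  · gcongr
    exact WithBot.coe_le_coe.mpr (add_smul_eJ_apply_mono hst)
  · gcongr
    refine WithBot.coe_le_coe.mpr ?_
    linarith [add_smul_eJ_apply_le_add (ξ := ξ) (J := J) (j := j) htu]

theorem mem_tightCols_ends_of_tdot_eq (ha : ∃ j, a j ≠ ⊥) (hst : s ≤ t) (htu : t < u)
    (hus : tdot a (toT (ξ + u • eJ J)) = tdot a (toT (ξ + s • eJ J)))
    (ht : j ∈ tightCols a (ξ + t • eJ J)) :
    j ∈ tightCols a (ξ + s • eJ J) ∧ j ∈ tightCols a (ξ + u • eJ J) := by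
  have hts : tdot a (toT (ξ + t • eJ J)) = tdot a (toT (ξ + s • eJ J)) :=
    le_antisymm ((tdot_line_mono a htu.le).trans_eq hus) (tdot_line_mono a hst)
  have hjJ : j ∉ J := fun hjJ => by
    have h := (add_le_tdot_line_iff (tdot_toT_ne_bot ha _) htu).mpr
      ⟨j, mem_inter.mpr ⟨ht, hjJ⟩⟩
    obtain ⟨v, hv⟩ := WithBot.ne_bot_iff_exists.mp (tdot_toT_ne_bot ha (ξ + s • eJ J))
    rw [hts, hus, ← hv, ← WithBot.coe_add, WithBot.coe_le_coe] at h
    linarith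
  simp only [mem_tightCols, hus, hts, add_smul_eJ_apply_of_notMem hjJ] at ht ⊢
  exact ⟨ht, ht⟩

theorem mem_tightCols_ends_of_tdot_eq_add (ha : ∃ j, a j ≠ ⊥) (hst : s < t) (htu : t ≤ u)
    (hus : tdot a (toT (ξ + u • eJ J)) = tdot a (toT (ξ + s • eJ J)) + ((u - s : ℝ) : TT))
    (ht : j ∈ tightCols a (ξ + t • eJ J)) :
    j ∈ tightCols a (ξ + s • eJ J) ∧ j ∈ tightCols a (ξ + u • eJ J) := by
  have hts : tdot a (toT (ξ + t • eJ J)) =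
      tdot a (toT (ξ + s • eJ J)) + ((t - s : ℝ) : TT) := by
    refine le_antisymm (tdot_line_le_add a hst.le) ?_
    rw [tdot_line_eq_max a hst.le htu, hus, add_assoc, ← WithBot.coe_add]
    exact le_max_of_le_right (by ring_nf; rfl)
  have hjJ : j ∈ J := by
    by_contra hjJ
    have h := (tdot_line_le_iff (tdot_toT_ne_bot ha _) hst).mpr
      ⟨j, mem_inter.mpr ⟨ht, mem_compl.mpr hjJ⟩⟩
    obtain ⟨v, hv⟩ := WithBot.ne_bot_iff_exists.mp (tdot_toT_ne_bot ha (ξ + s • eJ J))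
    rw [hts, ← hv, ← WithBot.coe_add, WithBot.coe_le_coe] at h
    linarith
  simp only [mem_tightCols_iff_le, hus, hts, add_smul_eJ_apply_of_mem hjJ] at ht ⊢
  constructor
  · simpa using add_coe_le_add_coe_of_sub_le_sub (x' := 0) (y' := ξ j + s) ht (by linarith)
  · exact add_coe_le_add_coe_of_sub_le_sub ht (by linarith)

theorem tightCols_line_eq_inter_of_not_meetsBothSides (ha : ∃ j, a j ≠ ⊥) (hst : s < t)
    (htu : t < u)
    (hsides : ∀ t, s < t → t < u → ¬MeetsBothSides (tightCols a (ξ + t • eJ J)) J) :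
    tightCols a (ξ + t • eJ J) = tightCols a (ξ + s • eJ J) ∩ tightCols a (ξ + u • eJ J) := by
  ext j
  rw [mem_inter]
  refine ⟨fun hj => ?_, fun hj => mem_tightCols_line_of_mem_ends hst.le htu.le hj.1 hj.2⟩
  rcases tdot_line_eq_or_eq_add_of_not_meetsBothSides ha (hst.trans htu).le hsides with h | h
  · exact mem_tightCols_ends_of_tdot_eq ha hst.le htu h hj
  · exact mem_tightCols_ends_of_tdot_eq_add ha hst htu.le h hj

end Line

section Balance

open Finset

variable {n : ℕ} {ξ : Fin (n + 1) → ℝ} {J : Finset (Fin (n + 1))} {s t u : ℝ}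
  {p q : Fin (n + 1) → TT}

theorem tightCols_inter_nonempty_of_tdot_le (htu : t < u)
    (ht : tdot p (toT (ξ + t • eJ J)) = tdot q (toT (ξ + t • eJ J)))
    (hne : tdot p (toT (ξ + t • eJ J)) ≠ ⊥)
    (hu : tdot q (toT (ξ + u • eJ J)) ≤ tdot p (toT (ξ + u • eJ J)))
    (hq : (tightCols q (ξ + t • eJ J) ∩ J).Nonempty) :
    (tightCols p (ξ + t • eJ J) ∩ J).Nonempty := by
  rw [← add_le_tdot_line_iff hne htu, ht]
  exact ((add_le_tdot_line_iff (ht ▸ hne) htu).mpr hq).trans hu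

theorem tightCols_inter_compl_nonempty_of_tdot_le (hst : s < t)
    (ht : tdot p (toT (ξ + t • eJ J)) = tdot q (toT (ξ + t • eJ J)))
    (hne : tdot p (toT (ξ + t • eJ J)) ≠ ⊥)
    (hs : tdot q (toT (ξ + s • eJ J)) ≤ tdot p (toT (ξ + s • eJ J)))
    (hq : (tightCols q (ξ + t • eJ J) ∩ Jᶜ).Nonempty) :
    (tightCols p (ξ + t • eJ J) ∩ Jᶜ).Nonempty := by
  rw [← tdot_line_le_iff hne hst, ht]
  exact ((tdot_line_le_iff (ht ▸ hne) hst).mpr hq).trans hs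

theorem one_lt_card_tightCols_inter_or_inter_compl (hsign : ∀ j, min (p j) (q j) = ⊥)
    (hst : s < t) (htu : t < u)
    (ht : tdot p (toT (ξ + t • eJ J)) = tdot q (toT (ξ + t • eJ J)))
    (hne : tdot p (toT (ξ + t • eJ J)) ≠ ⊥)
    (hs : tdot q (toT (ξ + s • eJ J)) ≤ tdot p (toT (ξ + s • eJ J)))
    (hu : tdot q (toT (ξ + u • eJ J)) ≤ tdot p (toT (ξ + u • eJ J))) :
    1 < #(tightCols (p ⊔ q) (ξ + t • eJ J) ∩ J) ∨
      1 < #(tightCols (p ⊔ q) (ξ + t • eJ J) ∩ Jᶜ) := by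
  obtain ⟨k, hk⟩ := tightCols_nonempty q (ξ + t • eJ J)
  by_cases hkJ : k ∈ J
  · have hq : (tightCols q (ξ + t • eJ J) ∩ J).Nonempty := ⟨k, mem_inter.mpr ⟨hk, hkJ⟩⟩
    exact Or.inl (one_lt_card_tightCols_sup_inter hsign ht hne
      (tightCols_inter_nonempty_of_tdot_le htu ht hne hu hq) hq)
  · have hq : (tightCols q (ξ + t • eJ J) ∩ Jᶜ).Nonempty :=
      ⟨k, mem_inter.mpr ⟨hk, mem_compl.mpr hkJ⟩⟩
    exact Or.inr (one_lt_card_tightCols_sup_inter hsign ht hne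
      (tightCols_inter_compl_nonempty_of_tdot_le hst ht hne hs hq) hq)

theorem one_lt_card_tightCols_inter_of_nonempty (hsign : ∀ j, min (p j) (q j) = ⊥) (htu : t < u)
    (ht : tdot p (toT (ξ + t • eJ J)) = tdot q (toT (ξ + t • eJ J)))
    (hne : tdot p (toT (ξ + t • eJ J)) ≠ ⊥)
    (hu : tdot p (toT (ξ + u • eJ J)) = tdot q (toT (ξ + u • eJ J)))
    (hJ : (tightCols (p ⊔ q) (ξ + t • eJ J) ∩ J).Nonempty) :
    1 < #(tightCols (p ⊔ q) (ξ + t • eJ J) ∩ J) := by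
  rw [tightCols_sup ht, union_inter_distrib_right, union_nonempty] at hJ
  rcases hJ with hp | hq
  · exact one_lt_card_tightCols_sup_inter hsign ht hne hp
      (tightCols_inter_nonempty_of_tdot_le htu ht.symm (ht ▸ hne) hu.le hp)
  · exact one_lt_card_tightCols_sup_inter hsign ht hne
      (tightCols_inter_nonempty_of_tdot_le htu ht hne hu.ge hq) hq

theorem one_lt_card_tightCols_inter_compl_of_nonempty (hsign : ∀ j, min (p j) (q j) = ⊥)
    (hst : s < t)
    (ht : tdot p (toT (ξ + t • eJ J)) = tdot q (toT (ξ + t • eJ J)))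
    (hne : tdot p (toT (ξ + t • eJ J)) ≠ ⊥)
    (hs : tdot p (toT (ξ + s • eJ J)) = tdot q (toT (ξ + s • eJ J)))
    (hJ : (tightCols (p ⊔ q) (ξ + t • eJ J) ∩ Jᶜ).Nonempty) :
    1 < #(tightCols (p ⊔ q) (ξ + t • eJ J) ∩ Jᶜ) := by
  rw [tightCols_sup ht, union_inter_distrib_right, union_nonempty] at hJ
  rcases hJ with hp | hq
  · exact one_lt_card_tightCols_sup_inter hsign ht hne hp
      (tightCols_inter_compl_nonempty_of_tdot_le hst ht.symm (ht ▸ hne) hs.le hp)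
  · exact one_lt_card_tightCols_sup_inter hsign ht hne
      (tightCols_inter_compl_nonempty_of_tdot_le hst ht hne hs.ge hq) hq

end Balance

section TangentDigraph

open Finset

variable {m n : ℕ} {Wp Wn : Fin m → Fin (n + 1) → TT} {K : Finset (Fin m)}
  {ξ : Fin (n + 1) → ℝ} {J : Finset (Fin (n + 1))} {s t u : ℝ} {i : Fin m}

theorem isHypNode_iff_tdot_eq (hrow : ∃ j, max (Wp i j) (Wn i j) ≠ ⊥) (x : Fin (n + 1) → ℝ) :
    isHypNode Wp Wn x i ↔ tdot (Wp i) (toT x) = tdot (Wn i) (toT x) := by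
  refine ⟨And.left, fun h => ⟨h, bot_lt_iff_ne_bot.mpr ?_⟩⟩
  have hmod : tdot (Wp i ⊔ Wn i) (toT x) ≠ ⊥ := tdot_toT_ne_bot hrow x
  rwa [tdot_sup, ← h, sup_idem] at hmod

theorem isTEdge_iff {x : Fin (n + 1) → ℝ} {j : Fin (n + 1)} :
    isTEdge Wp Wn x i j ↔ isHypNode Wp Wn x i ∧ j ∈ tightCols (tmod Wp Wn i) x := by
  rw [isTEdge, mem_tightCols]

theorem isHypNode_line_of_ends (hst : s ≤ t) (htu : t ≤ u)
    (hs : isHypNode Wp Wn (ξ + s • eJ J) i) (hu : isHypNode Wp Wn (ξ + u • eJ J) i) :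
    isHypNode Wp Wn (ξ + t • eJ J) i := by
  refine ⟨?_, hs.2.trans_le (tdot_line_mono (Wp i) hst)⟩
  rw [tdot_line_eq_max (Wp i) hst htu, tdot_line_eq_max (Wn i) hst htu, hs.1, hu.1]

theorem isHypNode_of_mem_edgeEK (hrow : ∃ j, max (Wp i j) (Wn i j) ≠ ⊥) {x : Fin (n + 1) → ℝ}
    (hx : toT x ∈ edgeEK Wp Wn K) (hi : i ∈ K) : isHypNode Wp Wn x i :=
  (isHypNode_iff_tdot_eq hrow x).mpr (hx.1 i hi)

theorem isHypNode_line_iff_mem_and_not_meetsBothSides (hsign : ∀ i j, min (Wp i j) (Wn i j) = ⊥)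
    (hrow : ∀ i, ∃ j, max (Wp i j) (Wn i j) ≠ ⊥) (hgen : TropGeneric (tmod Wp Wn))
    (hK : n ≤ #K + 1) (hJ : J ≠ ∅) (hJ' : J ≠ univ)
    (hs : toT (ξ + s • eJ J) ∈ edgeEK Wp Wn K) (hu : toT (ξ + u • eJ J) ∈ edgeEK Wp Wn K)
    (hst : s < t) (htu : t < u) :
    (∀ i, isHypNode Wp Wn (ξ + t • eJ J) i ↔ i ∈ K) ∧
      ∀ i ∈ K, ¬MeetsBothSides (tightCols (tmod Wp Wn i) (ξ + t • eJ J)) J := by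
  have hnode : ∀ i ∈ K, isHypNode Wp Wn (ξ + t • eJ J) i := fun i hi =>
    isHypNode_line_of_ends hst.le htu.le (isHypNode_of_mem_edgeEK (hrow i) hs hi)
      (isHypNode_of_mem_edgeEK (hrow i) hu hi)
  obtain ⟨hsub, hboth⟩ := (hgen.hasUniqueMatchings_tightCols hrow (ξ + t • eJ J)
    ).subset_and_not_one_lt_card_both_of_card_le (S := {i | isHypNode Wp Wn (ξ + t • eJ J) i})
    (nonempty_iff_ne_empty.mpr hJ)
    (nonempty_iff_ne_empty.mpr fun h => hJ' ((compl_eq_empty_iff J).mp h))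
    (fun i hi => mem_filter.mpr ⟨mem_univ i, hnode i hi⟩) (by rw [Fintype.card_fin]; omega)
    fun i hi => by
      obtain ⟨-, heq, hbot⟩ := mem_filter.mp hi
      exact one_lt_card_tightCols_inter_or_inter_compl (hsign i) hst htu heq hbot.ne' (hs.2 i)
        (hu.2 i)
  refine ⟨fun i => ⟨fun hi => hsub (mem_filter.mpr ⟨mem_univ i, hi⟩), hnode i⟩,
    fun i hi hsides => hboth i (mem_filter.mpr ⟨mem_univ i, hnode i hi⟩) ⟨?_, ?_⟩⟩
  · exact one_lt_card_tightCols_inter_of_nonempty (hsign i) htu (hnode i hi).1 (hnode i hi).2.ne'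
      (hu.1 i hi) hsides.1
  · exact one_lt_card_tightCols_inter_compl_of_nonempty (hsign i) hst (hnode i hi).1
      (hnode i hi).2.ne' (hs.1 i hi) hsides.2

theorem isHypNode_ends_iff_mem (hrow : ∀ i, ∃ j, max (Wp i j) (Wn i j) ≠ ⊥)
    (hs : toT (ξ + s • eJ J) ∈ edgeEK Wp Wn K) (hu : toT (ξ + u • eJ J) ∈ edgeEK Wp Wn K)
    (hst : s ≤ t) (htu : t ≤ u) (hnode : ∀ i, isHypNode Wp Wn (ξ + t • eJ J) i ↔ i ∈ K)
    (i : Fin m) :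
    isHypNode Wp Wn (ξ + s • eJ J) i ∧ isHypNode Wp Wn (ξ + u • eJ J) i ↔ i ∈ K :=
  ⟨fun h => (hnode i).mp (isHypNode_line_of_ends hst htu h.1 h.2), fun hi =>
    ⟨isHypNode_of_mem_edgeEK (hrow i) hs hi, isHypNode_of_mem_edgeEK (hrow i) hu hi⟩⟩

theorem isTEdge_line_iff_ends (hrow : ∀ i, ∃ j, max (Wp i j) (Wn i j) ≠ ⊥)
    (hst : s < t) (htu : t < u) (hnode : ∀ i, isHypNode Wp Wn (ξ + t • eJ J) i ↔ i ∈ K)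
    (hends : ∀ i, isHypNode Wp Wn (ξ + s • eJ J) i ∧ isHypNode Wp Wn (ξ + u • eJ J) i ↔ i ∈ K)
    (hsides : ∀ t, s < t → t < u →
      ∀ i ∈ K, ¬MeetsBothSides (tightCols (tmod Wp Wn i) (ξ + t • eJ J)) J)
    (i : Fin m) (j : Fin (n + 1)) :
    isTEdge Wp Wn (ξ + t • eJ J) i j ↔
      isTEdge Wp Wn (ξ + s • eJ J) i j ∧ isTEdge Wp Wn (ξ + u • eJ J) i j := by
  rw [isTEdge_iff, isTEdge_iff, isTEdge_iff, and_and_and_comm, hends, hnode, ← mem_inter]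
  refine and_congr_right fun hi => Finset.ext_iff.mp ?_ j
  exact tightCols_line_eq_inter_of_not_meetsBothSides (hrow i) hst htu
    fun r hsr hru => hsides r hsr hru i hi

theorem arcRel_iff_and_of_isTEdge_iff_and {x y z : Fin (n + 1) → ℝ}
    (h : ∀ i j, isTEdge Wp Wn x i j ↔ isTEdge Wp Wn y i j ∧ isTEdge Wp Wn z i j)
    (v w : TGV m n) :
    arcRel Wp Wn x v w ↔ arcRel Wp Wn y v w ∧ arcRel Wp Wn z v w := by
  rcases v with i | j <;> rcases w with i' | j' <;> simp only [arcRel, h] <;> tauto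

end TangentDigraph

theorem stmt14_general {m n : ℕ} {Wp Wn : Fin m → Fin (n + 1) → TT}
    (hsign : ∀ i j, min (Wp i j) (Wn i j) = ⊥)
    (hrow : ∀ i, ∃ j, max (Wp i j) (Wn i j) ≠ ⊥) (hgen : TropGeneric (tmod Wp Wn))
    {K : Finset (Fin m)} (hK : n ≤ K.card + 1) {ξ : Fin (n + 1) → ℝ}
    {J : Finset (Fin (n + 1))} (hJ : J ≠ ∅) (hJ' : J ≠ Finset.univ) {μ : ℝ}
    (hξ : toT ξ ∈ edgeEK Wp Wn K) (hμ : toT (ξ + μ • eJ J) ∈ edgeEK Wp Wn K) {lam : ℝ}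
    (h0 : 0 < lam) (h1 : lam < μ) :
    (∀ i, isHypNode Wp Wn (ξ + lam • eJ J) i ↔ i ∈ K) ∧
      (∀ i, (isHypNode Wp Wn ξ i ∧ isHypNode Wp Wn (ξ + μ • eJ J) i) ↔ i ∈ K) ∧
      (∀ u v, arcRel Wp Wn (ξ + lam • eJ J) u v ↔
        (arcRel Wp Wn ξ u v ∧ arcRel Wp Wn (ξ + μ • eJ J) u v)) := by
  have hstart : ξ + (0 : ℝ) • eJ J = ξ := by rw [zero_smul, add_zero]
  rw [← hstart] at hξ
  have hinterior := fun t (ht0 : 0 < t) (htμ : t < μ) =>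
    isHypNode_line_iff_mem_and_not_meetsBothSides hsign hrow hgen hK hJ hJ' hξ hμ ht0 htμ
  have hnode := (hinterior lam h0 h1).1
  have hends := isHypNode_ends_iff_mem hrow hξ hμ h0.le h1.le hnode
  have hedge := isTEdge_line_iff_ends hrow h0 h1 hnode hends fun t ht0 htμ =>
    (hinterior t ht0 htμ).2
  rw [hstart] at hends hedge
  exact ⟨hnode, hends, arcRel_iff_and_of_isTEdge_iff_and hedge⟩

/-- The tangent digraph is constant on the relative interior
of an ordinary segment, and it is the intersection of the tangent digraphs at
the two endpoints; its hyperplane node set is `K`. -/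
theorem stmt14 {m n : ℕ} (Wp Wn : Fin m → Fin (n + 1) → TT)
    (hsign : ∀ i j, min (Wp i j) (Wn i j) = ⊥)
    (hrow : ∀ i, ∃ j, max (Wp i j) (Wn i j) ≠ ⊥)
    (hgen : TropGeneric (tmod Wp Wn))
    (hfin : ∀ x ∈ coneC Wp Wn, x ≠ (fun _ => (⊥ : TT)) → ∀ j, x j ≠ ⊥)
    (K : Finset (Fin m)) (hK : K.card + 1 = n)
    (hU : ∃ (er : Fin K.card → Fin m) (ec : Fin K.card → Fin (n + 1)),
      Function.Injective er ∧ (∀ a, er a ∈ K) ∧ Function.Injective ec ∧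
      (∀ a, ec a ≠ Fin.last n) ∧ ⊥ < tper (fun a b => tmod Wp Wn (er a) (ec b)))
    (hEK : ∃ y : Fin (n + 1) → ℝ, toT y ∈ edgeEK Wp Wn K)
    (ξ : Fin (n + 1) → ℝ) (J : Finset (Fin (n + 1))) (μ : ℝ)
    (hseg : IsOrdSeg Wp Wn K ξ J μ) :
    ∀ lam : ℝ, 0 < lam → lam < μ →
      (∀ i, isHypNode Wp Wn (ξ + lam • eJ J) i ↔ i ∈ K) ∧
      (∀ i, (isHypNode Wp Wn ξ i ∧ isHypNode Wp Wn (ξ + μ • eJ J) i) ↔ i ∈ K) ∧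
      (∀ u v, arcRel Wp Wn (ξ + lam • eJ J) u v ↔
        (arcRel Wp Wn ξ u v ∧ arcRel Wp Wn (ξ + μ • eJ J) u v)) := by
  intro lam h0 h1
  obtain ⟨hμ, hJ, hJ', hin, -, -⟩ := hseg
  exact stmt14_general hsign hrow hgen hK.ge hJ hJ' (by simpa using hin 0 le_rfl hμ.le)
    (hin μ hμ.le le_rfl) h0 h1
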